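/- Let n ≥ 1, let a ≥ 0 and c be real numbers, let f : ℝⁿ → ℝ be a smooth everywhere positive function, let F : ℝⁿ → ℝ be a smooth function with compact support, and let R : ℝⁿ → ℝ be a continuous function. Assume that a·(Δf)(x)/f(x) + R(x) ≥ c for all x ∈ ℝⁿ, where Δu := −Σᵢ ∂²u/∂xᵢ². Then, with h := f·F, ∫_{ℝⁿ} (a·‖∇h‖² + R·h²) dx ≥ c·∫_{ℝⁿ} h² dx. (This is the abstract form of the paper's conclusion that the first eigenvalue of the conformal Laplacian satisfies λ₁(L) ≥ inf_M (f⁻¹ L f) for every smooth positive function f, with L = 4((n−1)/(n−2))Δ + R and a = 4(n−1)/(n−2).) -/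

import Mathlib

open MeasureTheory

/-- The geometers' (nonnegative) Laplacian on `ℝⁿ`: `Δu = -∑ i ∂²u/∂xᵢ²`. -/
noncomputable def geomLaplacian {n : ℕ} (u : EuclideanSpace ℝ (Fin n) → ℝ)
    (x : EuclideanSpace ℝ (Fin n)) : ℝ :=
  -∑ i : Fin n,
    fderiv ℝ (fun y => fderiv ℝ u y (EuclideanSpace.single i 1)) x (EuclideanSpace.single i 1)

/-!
Write `Δ` for the trace of the Hessian. For `F` compactly supported, integrating by parts gives the
ground-state identity `∫ ‖∇(fF)‖² = ∫ f² ‖∇F‖² + ∫ (-Δf) f F²`. Discarding the nonnegative term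
`f² ‖∇F‖²` leaves `∫ (a ‖∇(fF)‖² + R (fF)²) ≥ ∫ f (-a Δf + R f) F²`, and `f (-a Δf + R f)` is
bounded below by `c f²`.
-/

open scoped Gradient Laplacian RealInnerProductSpace

lemma mul_sq_le_of_le_div_add {K : Type*} [Field K] [LinearOrder K] [IsStrictOrderedRing K]
    {c p r t : K} (ht : t ≠ 0) (h : c ≤ p / t + r) : c * t ^ 2 ≤ t * (p + r * t) :=
  calc c * t ^ 2 ≤ (p / t + r) * t ^ 2 := by gcongr
    _ = t * (p + r * t) := by field_simp

section Gradient

variable {E : Type*} [NormedAddCommGroup E] [InnerProductSpace ℝ E] [CompleteSpace E]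
  {u v : E → ℝ} {x : E}

lemma gradient_fun_mul (hu : DifferentiableAt ℝ u x) (hv : DifferentiableAt ℝ v x) :
    ∇ (fun y => u y * v y) x = u x • ∇ v x + v x • ∇ u x := by
  simp only [gradient, fderiv_fun_mul hu hv, map_add, map_smulₛₗ, conj_trivial]

lemma norm_gradient_mul_sq (hu : DifferentiableAt ℝ u x) (hv : DifferentiableAt ℝ v x) :
    ‖∇ (fun y => u y * v y) x‖ ^ 2 =
      u x ^ 2 * ‖∇ v x‖ ^ 2 + ⟪∇ u x, ∇ (fun y => u y * v y ^ 2) x⟫ := by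
  simp only [pow_two (v _)]
  rw [gradient_fun_mul hu (hv.fun_mul hv), gradient_fun_mul hv hv, gradient_fun_mul hu hv]
  simp only [← real_inner_self_eq_norm_sq, inner_add_left, inner_add_right, real_inner_smul_left,
    real_inner_smul_right, real_inner_comm (∇ u x) (∇ v x)]
  ring

lemma inner_gradient_eq_sum_fderiv_mul {ι : Type*} [Fintype ι] (b : OrthonormalBasis ι ℝ E) :
    ⟪∇ u x, ∇ v x⟫ = ∑ i, fderiv ℝ u x (b i) * fderiv ℝ v x (b i) := by
  rw [← b.sum_inner_mul_inner]
  simp only [inner_gradient_left, inner_gradient_right, conj_trivial]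

lemma continuous_gradient (hu : ContDiff ℝ 1 u) : Continuous (∇ u) :=
  (InnerProductSpace.toDual ℝ E).symm.continuous.comp (hu.continuous_fderiv one_ne_zero)

lemma hasCompactSupport_gradient (hu : HasCompactSupport u) : HasCompactSupport (∇ u) :=
  (hu.fderiv ℝ).comp_left (map_zero (InnerProductSpace.toDual ℝ E).symm)

variable [MeasurableSpace E] [OpensMeasurableSpace E] {μ : Measure E} [IsFiniteMeasureOnCompacts μ]

lemma integrable_inner_gradient (hu : ContDiff ℝ 1 u) (hv : ContDiff ℝ 1 v)
    (hvc : HasCompactSupport v) : Integrable (fun x => ⟪∇ u x, ∇ v x⟫) μ :=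
  ((continuous_gradient hu).inner (continuous_gradient hv)).integrable_of_hasCompactSupport
    ((hasCompactSupport_gradient hvc).mono fun x =>
      mt fun hvx : ∇ v x = 0 => by simp only [hvx, inner_zero_right])

lemma integrable_norm_gradient_sq (hu : ContDiff ℝ 1 u) (huc : HasCompactSupport u) :
    Integrable (fun x => ‖∇ u x‖ ^ 2) μ := by
  simpa only [real_inner_self_eq_norm_sq] using integrable_inner_gradient hu hu huc

end Gradient

section Laplacian

variable {E G : Type*} [NormedAddCommGroup E] [InnerProductSpace ℝ E] [FiniteDimensional ℝ E]
  [NormedAddCommGroup G] [NormedSpace ℝ G]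

lemma laplacian_eq_sum_fderiv_fderiv {ι : Type*} [Fintype ι] (b : OrthonormalBasis ι ℝ E)
    {u : E → G} {x : E} (hu : DifferentiableAt ℝ (fderiv ℝ u) x) :
    Δ u x = ∑ i, fderiv ℝ (fun y => fderiv ℝ u y (b i)) x (b i) := by
  simp [InnerProductSpace.laplacian_eq_iteratedFDeriv_orthonormalBasis u b,
    iteratedFDeriv_two_apply, fderiv_clm_apply hu (differentiableAt_const _)]

lemma geomLaplacian_eq_neg_laplacian {n : ℕ} {u : EuclideanSpace ℝ (Fin n) → ℝ}
    {x : EuclideanSpace ℝ (Fin n)} (hu : ContDiffAt ℝ 2 u x) : geomLaplacian u x = -Δ u x := by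
  have hDu : DifferentiableAt ℝ (fderiv ℝ u) x :=
    (hu.fderiv_right (m := 1) (by norm_num)).differentiableAt one_ne_zero
  simp [geomLaplacian, laplacian_eq_sum_fderiv_fderiv (EuclideanSpace.basisFun (Fin n) ℝ) hDu]

lemma continuous_laplacian {u : E → G} (hu : ContDiff ℝ 2 u) : Continuous (Δ u) := by
  rw [InnerProductSpace.laplacian_eq_iteratedFDeriv_stdOrthonormalBasis]
  have := hu.continuous_iteratedFDeriv le_rfl
  fun_prop

end Laplacian

section IntegrationByParts

variable {E : Type*} [NormedAddCommGroup E] [NormedSpace ℝ E] [FiniteDimensional ℝ E]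
  [MeasurableSpace E] [BorelSpace E] {μ : Measure E} [μ.IsAddHaarMeasure] {u v : E → ℝ}

lemma integral_mul_fderiv_eq_neg_of_hasCompactSupport (hu : ContDiff ℝ 1 u) (hv : ContDiff ℝ 1 v)
    (hvc : HasCompactSupport v) (e : E) :
    ∫ x, u x * fderiv ℝ v x e ∂μ = -∫ x, fderiv ℝ u x e * v x ∂μ :=
  integral_mul_fderiv_eq_neg_fderiv_mul_of_integrable
    ((((hu.continuous_fderiv one_ne_zero).clm_apply continuous_const).mul
      hv.continuous).integrable_of_hasCompactSupport hvc.mul_left)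
    ((hu.continuous.mul ((hv.continuous_fderiv one_ne_zero).clm_apply
      continuous_const)).integrable_of_hasCompactSupport (hvc.fderiv_apply ℝ e).mul_left)
    ((hu.continuous.mul hv.continuous).integrable_of_hasCompactSupport hvc.mul_left)
    (fun x _ => hu.differentiable one_ne_zero x) (fun x _ => hv.differentiable one_ne_zero x)

end IntegrationByParts

section GroundState

variable {E : Type*} [NormedAddCommGroup E] [InnerProductSpace ℝ E] [FiniteDimensional ℝ E]
  [MeasurableSpace E] [BorelSpace E] {μ : Measure E} [μ.IsAddHaarMeasure] {u v f F : E → ℝ}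

theorem integral_inner_gradient_eq_neg_integral_laplacian_mul (hu : ContDiff ℝ 2 u)
    (hv : ContDiff ℝ 1 v) (hvc : HasCompactSupport v) :
    ∫ x, ⟪∇ u x, ∇ v x⟫ ∂μ = -∫ x, Δ u x * v x ∂μ := by
  let b := stdOrthonormalBasis ℝ E
  have hDu : ContDiff ℝ 1 (fderiv ℝ u) := hu.fderiv_right (by norm_num)
  have hDub (i) : ContDiff ℝ 1 (fun x => fderiv ℝ u x (b i)) := hDu.clm_apply contDiff_const
  have hDuDv (i) : Integrable (fun x => fderiv ℝ u x (b i) * fderiv ℝ v x (b i)) μ :=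
    ((hDub i).continuous.mul ((hv.continuous_fderiv one_ne_zero).clm_apply
      continuous_const)).integrable_of_hasCompactSupport (hvc.fderiv_apply ℝ (b i)).mul_left
  have hDDuv (i) : Integrable (fun x => fderiv ℝ (fun y => fderiv ℝ u y (b i)) x (b i) * v x) μ :=
    ((((hDub i).continuous_fderiv one_ne_zero).clm_apply continuous_const).mul
      hv.continuous).integrable_of_hasCompactSupport hvc.mul_left
  calc ∫ x, ⟪∇ u x, ∇ v x⟫ ∂μ
      = ∑ i, ∫ x, fderiv ℝ u x (b i) * fderiv ℝ v x (b i) ∂μ := by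
        simp only [inner_gradient_eq_sum_fderiv_mul b]
        exact integral_finsetSum _ fun i _ => hDuDv i
    _ = ∑ i, -∫ x, fderiv ℝ (fun y => fderiv ℝ u y (b i)) x (b i) * v x ∂μ :=
        Finset.sum_congr rfl fun i _ =>
          integral_mul_fderiv_eq_neg_of_hasCompactSupport (hDub i) hv hvc (b i)
    _ = -∫ x, Δ u x * v x ∂μ := by
        simp only [laplacian_eq_sum_fderiv_fderiv b (hDu.differentiable one_ne_zero _),
          Finset.sum_mul, Finset.sum_neg_distrib]
        rw [integral_finsetSum _ fun i _ => hDDuv i]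

theorem integral_norm_gradient_mul_sq (hf : ContDiff ℝ 2 f) (hF : ContDiff ℝ 1 F)
    (hFc : HasCompactSupport F) :
    ∫ x, ‖∇ (fun y => f y * F y) x‖ ^ 2 ∂μ =
      ∫ x, f x ^ 2 * ‖∇ F x‖ ^ 2 ∂μ - ∫ x, Δ f x * (f x * F x ^ 2) ∂μ := by
  have hf1 : ContDiff ℝ 1 f := hf.of_le one_le_two
  have hg : ContDiff ℝ 1 (fun x => f x * F x ^ 2) := hf1.mul (hF.pow 2)
  have hgc : HasCompactSupport (fun x => f x * F x ^ 2) :=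
    (hFc.comp_left (zero_pow two_ne_zero)).mul_left
  have hint : Integrable (fun x => f x ^ 2 * ‖∇ F x‖ ^ 2) μ :=
    ((hf.continuous.pow 2).mul
      ((continuous_gradient hF).norm.pow 2)).integrable_of_hasCompactSupport
      ((hasCompactSupport_gradient hFc).norm.comp_left (zero_pow two_ne_zero)).mul_left
  simp only [norm_gradient_mul_sq (hf1.differentiable one_ne_zero _)
    (hF.differentiable one_ne_zero _)]
  rw [integral_add hint (integrable_inner_gradient hf1 hg hgc),
    integral_inner_gradient_eq_neg_integral_laplacian_mul hf hg hgc, ← sub_eq_add_neg]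

lemma neg_integral_laplacian_mul_le_integral_norm_gradient_mul_sq (hf : ContDiff ℝ 2 f)
    (hF : ContDiff ℝ 1 F) (hFc : HasCompactSupport F) :
    -∫ x, Δ f x * (f x * F x ^ 2) ∂μ ≤ ∫ x, ‖∇ (fun y => f y * F y) x‖ ^ 2 ∂μ := by
  rw [integral_norm_gradient_mul_sq hf hF hFc, neg_eq_zero_sub]
  gcongr
  exact integral_nonneg fun x => by positivity

-- `hlb` is `f⁻¹ L f ≥ c` for `L = -a Δ + R`, multiplied by `f²`.
theorem first_eigenvalue_lower_bound_general {a c : ℝ} (ha : 0 ≤ a) (hf : ContDiff ℝ 2 f)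
    (hF : ContDiff ℝ 1 F) (hFc : HasCompactSupport F) {R : E → ℝ} (hR : LocallyIntegrable R μ)
    (hlb : ∀ᵐ x ∂μ, c * f x ^ 2 ≤ f x * (a * -Δ f x + R x * f x)) :
    c * ∫ x, (f x * F x) ^ 2 ∂μ ≤
      ∫ x, (a * ‖∇ (fun y => f y * F y) x‖ ^ 2 + R x * (f x * F x) ^ 2) ∂μ := by
  have hh : ContDiff ℝ 1 (fun x => f x * F x) := (hf.of_le one_le_two).mul hF
  have hhc : HasCompactSupport (fun x => f x * F x) := hFc.mul_left
  have hh2c : HasCompactSupport (fun x => (f x * F x) ^ 2) :=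
    hhc.comp_left (zero_pow two_ne_zero)
  have hmass : Integrable (fun x => (f x * F x) ^ 2) μ :=
    (hh.continuous.pow 2).integrable_of_hasCompactSupport hh2c
  have hpotential : Integrable (fun x => R x * (f x * F x) ^ 2) μ :=
    hR.integrable_smul_right_of_hasCompactSupport (hh.continuous.pow 2) hh2c
  have hlaplacian : Integrable (fun x => -(Δ f x * (f x * F x ^ 2))) μ :=
    (((continuous_laplacian hf).mul
      (hf.continuous.mul (hF.continuous.pow 2))).integrable_of_hasCompactSupport
      (hFc.comp_left (zero_pow two_ne_zero)).mul_left.mul_left).neg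
  have hdirichlet : Integrable (fun x => ‖∇ (fun y => f y * F y) x‖ ^ 2) μ :=
    integrable_norm_gradient_sq hh hhc
  calc c * ∫ x, (f x * F x) ^ 2 ∂μ
      = ∫ x, c * (f x * F x) ^ 2 ∂μ := (integral_const_mul _ _).symm
    _ ≤ ∫ x, (a * -(Δ f x * (f x * F x ^ 2)) + R x * (f x * F x) ^ 2) ∂μ := by
        refine integral_mono_ae (hmass.const_mul c) ((hlaplacian.const_mul a).add hpotential) ?_
        filter_upwards [hlb] with x hx
        linear_combination F x ^ 2 * hx
    _ = a * -∫ x, Δ f x * (f x * F x ^ 2) ∂μ + ∫ x, R x * (f x * F x) ^ 2 ∂μ := by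
        rw [integral_add (hlaplacian.const_mul a) hpotential, integral_const_mul, integral_neg]
    _ ≤ a * ∫ x, ‖∇ (fun y => f y * F y) x‖ ^ 2 ∂μ + ∫ x, R x * (f x * F x) ^ 2 ∂μ := by
        gcongr
        exact neg_integral_laplacian_mul_le_integral_norm_gradient_mul_sq hf hF hFc
    _ = ∫ x, (a * ‖∇ (fun y => f y * F y) x‖ ^ 2 + R x * (f x * F x) ^ 2) ∂μ := by
        rw [integral_add (hdirichlet.const_mul a) hpotential, integral_const_mul]

end GroundState

theorem first_eigenvalue_lower_bound (n : ℕ) (hn : 1 ≤ n)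
    (a c : ℝ) (ha : 0 ≤ a)
    (f F : EuclideanSpace ℝ (Fin n) → ℝ)
    (hf : ContDiff ℝ (⊤ : ℕ∞) f) (hfpos : ∀ x, 0 < f x)
    (hF : ContDiff ℝ (⊤ : ℕ∞) F) (hFc : HasCompactSupport F)
    (R : EuclideanSpace ℝ (Fin n) → ℝ) (hR : Continuous R)
    (hlb : ∀ x, c ≤ a * geomLaplacian f x / f x + R x) :
    c * ∫ x, (f x * F x) ^ 2 ≤
      ∫ x, (a * ‖gradient (fun y => f y * F y) x‖ ^ 2 + R x * (f x * F x) ^ 2) := by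
  have hf2 : ContDiff ℝ 2 f := hf.of_le (by norm_cast)
  refine first_eigenvalue_lower_bound_general ha hf2 (hF.of_le (by norm_cast)) hFc
    hR.locallyIntegrable (.of_forall fun x => ?_)
  rw [← geomLaplacian_eq_neg_laplacian hf2.contDiffAt]
  exact mul_sq_le_of_le_div_add (hfpos x).ne' (hlb x)
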